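/- In the Poissonized model with parameter λ > 0 and any k ∈ ℕ: E[2 X_k(λ) − X_{k+1}(λ)] ≥ Σ_{r ∈ {0,1}^k} P(Po(λP_r) = 2), where P_r = p^{#ones(r)} q^{k − #ones(r)}. (This follows from the pointwise inequalities I_{r0} + I_{r1} ≤ I_r, with strict inequality I_{r0} + I_{r1} ≤ 1 < 2I_r whenever exactly two or three inserted strings have prefix r.) -/

import Mathlib

/-!
Poissonized model for partial fillup in tries (Janson–Szpankowski).

An outcome `ω : ℕ × (ℕ → ℕ → Bool)` consists of the number `ω.1 = N` of inserted
strings and a source `ω.2` of infinitely many strings, where `ω.2 i j` is the `j`-th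
bit of the `i`-th string; the inserted strings are the strings `0, …, N-1`.  Under the
Poissonized measure, `N ~ Po(λ)` is independent of the strings, and all bits are
i.i.d. with `P(bit = 1) = p`.
-/

open MeasureTheory ProbabilityTheory Real Filter

/-- The number of strings among the first `n` (encoded in `ω`) whose first `k` bits
form the word `r ∈ {0,1}^k`. -/
def prefCount (ω : ℕ → ℕ → Bool) (n k : ℕ) (r : Fin k → Bool) : ℕ :=
  ((Finset.range n).filter fun i => ∀ j : Fin k, ω i j = r j).card

/-- `X_k`: the number of words `r ∈ {0,1}^k` that are prefixes of at least two of the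
first `n` strings. -/
def fillCount (ω : ℕ → ℕ → Bool) (n k : ℕ) : ℕ :=
  (Finset.univ.filter fun r : Fin k → Bool => 2 ≤ prefCount ω n k r).card

/-- `ν` is a probability measure on `ℕ → ℕ → Bool` under which all the bits
`ω i j` are i.i.d. with `P(bit = 1) = p` (characterized by cylinder probabilities). -/
def IIDBits (p : ℝ) (ν : Measure (ℕ → ℕ → Bool)) : Prop :=
  IsProbabilityMeasure ν ∧
    ∀ (S : Finset (ℕ × ℕ)) (b : ℕ × ℕ → Bool),
      ν {ω | ∀ s ∈ S, ω s.1 s.2 = b s} =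
        ∏ s ∈ S, ENNReal.ofReal (if b s then p else 1 - p)

/-- The Poissonized model: the number of inserted strings is `Po(λ)`, independent of the
i.i.d. source `ν` of strings. -/
noncomputable def poModel (lam : NNReal) (ν : Measure (ℕ → ℕ → Bool)) :
    Measure (ℕ × (ℕ → ℕ → Bool)) :=
  (ProbabilityTheory.poissonMeasure lam).prod ν

/-- `X_k(λ)` as a random variable on the Poissonized model: the number of words
`r ∈ {0,1}^k` that are prefixes of at least two of the `N` inserted strings. -/
def fillCountPo (k : ℕ) (ω : ℕ × (ℕ → ℕ → Bool)) : ℕ :=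
  fillCount ω.2 ω.1 k

/-- `X̄_k(λ) = X_k(λ) / 2^k`. -/
noncomputable def fracFilledPo (k : ℕ) (ω : ℕ × (ℕ → ℕ → Bool)) : ℝ :=
  (fillCountPo k ω : ℝ) / 2 ^ k

/-- The number of ones in the word `r ∈ {0,1}^k`. -/
def onesCount {k : ℕ} (r : Fin k → Bool) : ℕ :=
  (Finset.univ.filter fun j => r j = true).card

/-- `P_r = p^{#ones(r)} q^{k - #ones(r)}`, the probability that a random string begins
with the word `r`. -/
noncomputable def wordProb (p q : ℝ) {k : ℕ} (r : Fin k → Bool) : ℝ :=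
  p ^ onesCount r * q ^ (k - onesCount r)

open Finset
open scoped NNReal

/-!
Every string with prefix `r` has prefix `r0` or `r1`, so if both `r0` and `r1` are prefixes of at
least two strings then `r` is a prefix of at least four. Hence
`I_{r0} + I_{r1} + 1[exactly two strings have prefix r] ≤ 2 I_r`; now sum over `r` and integrate.
By Poisson thinning the number of strings with prefix `r` is `Po(λ P_r)`: given `N` its generating
function is `(1 + P_r (z - 1)) ^ N`, which averages to `exp (λ P_r (z - 1))` over `N ~ Po(λ)`.
-/

section IndependentEvents

variable {Ω : Type*} [MeasurableSpace Ω]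

theorem measurable_card_filter_mem {ι : Type*} {A : ι → Set Ω} [∀ i, DecidablePred (· ∈ A i)]
    (hA : ∀ i, MeasurableSet (A i)) (s : Finset ι) :
    Measurable fun ω ↦ #{i ∈ s | ω ∈ A i} := by
  simp only [card_filter]
  exact Finset.measurable_sum _ fun i _ ↦ .ite (hA i) measurable_const measurable_const

theorem measurable_card_filter_range_mem {A : ℕ → Set Ω} [∀ i, DecidablePred (· ∈ A i)]
    (hA : ∀ i, MeasurableSet (A i)) :
    Measurable fun x : ℕ × Ω ↦ #{i ∈ range x.1 | x.2 ∈ A i} :=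
  measurable_from_prod_countable_right fun n ↦ measurable_card_filter_mem hA (range n)

theorem integral_pow_indicator_one {μ : Measure Ω} [IsProbabilityMeasure μ] {A : Set Ω}
    (hA : MeasurableSet A) (z : ℂ) :
    ∫ ω, z ^ A.indicator (fun _ ↦ 1) ω ∂μ = 1 + μ.real A * (z - 1) := by
  calc ∫ ω, z ^ A.indicator (fun _ ↦ 1) ω ∂μ
      = ∫ ω, 1 + A.indicator (fun _ ↦ z - 1) ω ∂μ := by
        congr with ω
        by_cases hω : ω ∈ A <;> simp [hω]
    _ = 1 + μ.real A * (z - 1) := by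
        rw [integral_add (integrable_const _) ((integrable_const _).indicator hA),
          integral_indicator_const _ hA]
        simp

theorem integral_pow_card_filter_mem {μ : Measure Ω} {ι : Type*} {A : ι → Set Ω}
    [∀ i, DecidablePred (· ∈ A i)] (hA : ∀ i, MeasurableSet (A i)) (hindep : iIndepSet A μ)
    (s : Finset ι) (z : ℂ) :
    ∫ ω, z ^ #{i ∈ s | ω ∈ A i} ∂μ = ∏ i ∈ s, (1 + μ.real (A i) * (z - 1)) := by
  have := hindep.isProbabilityMeasure
  have hindep' : iIndepFun (fun i : s ↦ (A i).indicator fun _ ↦ (1 : ℕ)) μ :=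
    hindep.iIndepFun_indicator.restrict s
  calc ∫ ω, z ^ #{i ∈ s | ω ∈ A i} ∂μ
      = ∫ ω, ∏ i : s, z ^ (A i).indicator (fun _ ↦ 1) ω ∂μ := by
        congr with ω
        rw [prod_pow_eq_pow_sum, sum_coe_sort s fun i ↦ (A i).indicator (fun _ ↦ 1) ω, card_filter]
        simp only [Set.indicator_apply]
    _ = ∏ i : s, ∫ ω, z ^ (A i).indicator (fun _ ↦ 1) ω ∂μ :=
        hindep'.integral_fun_prod_comp (f := fun _ n ↦ z ^ n)
          (fun i ↦ (measurable_const.indicator (hA i)).aemeasurable) fun _ ↦ .of_discrete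
    _ = ∏ i ∈ s, (1 + μ.real (A i) * (z - 1)) := by
        simp only [integral_pow_indicator_one (hA _)]
        exact prod_coe_sort s fun i ↦ 1 + μ.real (A i) * (z - 1)

theorem integral_pow_poissonMeasure (r : ℝ≥0) (z : ℂ) :
    ∫ n, z ^ n ∂poissonMeasure r = Complex.exp (r * (z - 1)) := by
  have hexp := (NormedSpace.expSeries_div_hasSum_exp (r * z)).mul_left (Complex.exp (-r))
  rw [← Complex.exp_eq_exp_ℂ, ← Complex.exp_add] at hexp
  rw [integral_poissonMeasure, mul_sub_one, sub_eq_neg_add, ← hexp.tsum_eq]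
  congr with n
  simp only [Complex.real_smul]
  push_cast
  ring

section PoissonThinning

variable {μ : Measure Ω} {A : ℕ → Set Ω} [∀ i, DecidablePred (· ∈ A i)] {p : ℝ≥0}

theorem integral_pow_card_filter_range_mem_poissonMeasure_prod
    (hA : ∀ i, MeasurableSet (A i)) (hindep : iIndepSet A μ) (hp : ∀ i, μ (A i) = p) (r : ℝ≥0)
    {z : ℂ} (hz : ‖z‖ ≤ 1) :
    ∫ x : ℕ × Ω, z ^ #{i ∈ range x.1 | x.2 ∈ A i} ∂(poissonMeasure r).prod μ =
      Complex.exp (↑(r * p) * (z - 1)) := by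
  have := hindep.isProbabilityMeasure
  have hmeas : Measurable fun x : ℕ × Ω ↦ z ^ #{i ∈ range x.1 | x.2 ∈ A i} :=
    measurable_from_top.comp (measurable_card_filter_range_mem hA)
  have hint : Integrable (fun x : ℕ × Ω ↦ z ^ #{i ∈ range x.1 | x.2 ∈ A i})
      ((poissonMeasure r).prod μ) :=
    .of_bound hmeas.aestronglyMeasurable 1 <| ae_of_all _ fun x ↦ by
      simpa only [norm_pow] using pow_le_one₀ (norm_nonneg z) hz
  calc ∫ x : ℕ × Ω, z ^ #{i ∈ range x.1 | x.2 ∈ A i} ∂(poissonMeasure r).prod μ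
      = ∫ n, (1 + p * (z - 1)) ^ n ∂poissonMeasure r := by
        simp [integral_prod _ hint, integral_pow_card_filter_mem hA hindep, measureReal_def, hp]
    _ = Complex.exp (↑(r * p) * (z - 1)) := by
        rw [integral_pow_poissonMeasure]
        push_cast
        ring_nf

theorem hasLaw_card_filter_range_mem_poissonMeasure_prod
    (hA : ∀ i, MeasurableSet (A i)) (hindep : iIndepSet A μ) (hp : ∀ i, μ (A i) = p) (r : ℝ≥0) :
    HasLaw (fun x : ℕ × Ω ↦ #{i ∈ range x.1 | x.2 ∈ A i}) (poissonMeasure (r * p))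
      ((poissonMeasure r).prod μ) where
  aemeasurable := (measurable_card_filter_range_mem hA).aemeasurable
  map_eq := by
    have := hindep.isProbabilityMeasure
    have hmeas := measurable_card_filter_range_mem hA
    refine (MeasurableEmbedding.natCast (α := ℝ)).map_injective (Measure.ext_of_charFun ?_)
    ext t
    have hpgf := integral_pow_card_filter_range_mem_poissonMeasure_prod hA hindep hp r
      (Complex.norm_exp_ofReal_mul_I t).le
    rw [charFun_map_cast_poissonMeasure, ← hpgf, charFun_apply_real,
      integral_map .of_discrete (by fun_prop), integral_map hmeas.aemeasurable .of_discrete]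
    congr with x
    rw [← Complex.exp_nat_mul]
    push_cast
    ring_nf

end PoissonThinning

end IndependentEvents

theorem wordProb_eq_prod (p q : ℝ) {k : ℕ} (r : Fin k → Bool) :
    wordProb p q r = ∏ j, if r j then p else q := by
  have hzeros : #{j | ¬ r j = true} = k - #{j | r j = true} := by
    rw [← compl_filter, card_compl, Fintype.card_fin]
  rw [wordProb, onesCount, prod_ite, prod_const, prod_const, hzeros]

/-- The event that the `i`-th string has prefix `r`. -/
def prefixEvent {k : ℕ} (r : Fin k → Bool) (i : ℕ) : Set (ℕ → ℕ → Bool) :=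
  {ω | ∀ j : Fin k, ω i j = r j}

instance {k : ℕ} (r : Fin k → Bool) (i : ℕ) : DecidablePred (· ∈ prefixEvent r i) :=
  fun ω ↦ inferInstanceAs (Decidable (∀ j : Fin k, ω i j = r j))

theorem measurableSet_prefixEvent {k : ℕ} (r : Fin k → Bool) (i : ℕ) :
    MeasurableSet (prefixEvent r i) := by
  simp only [prefixEvent, Set.ofPred_forall]
  exact .iInter fun j ↦ measurableSet_eq_fun (by fun_prop) measurable_const

theorem measurable_prefCount {k : ℕ} (r : Fin k → Bool) :
    Measurable fun ω : ℕ × (ℕ → ℕ → Bool) ↦ prefCount ω.2 ω.1 k r :=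
  measurable_card_filter_range_mem (measurableSet_prefixEvent r)

namespace IIDBits

variable {p : ℝ} {ν : Measure (ℕ → ℕ → Bool)}

theorem mem_Icc (hν : IIDBits p ν) : p ∈ Set.Icc 0 1 := by
  have := hν.1
  have hle (b : Bool) : ENNReal.ofReal (if b then p else 1 - p) ≤ 1 := by
    simpa using (hν.2 {(0, 0)} fun _ ↦ b).symm.trans_le prob_le_one
  have htrue := hle true
  have hfalse := hle false
  simp only [ENNReal.ofReal_le_one, if_true, Bool.false_eq_true, if_false] at htrue hfalse
  exact ⟨by linarith, htrue⟩

theorem measure_biInter_prefixEvent (hν : IIDBits p ν) {k : ℕ} (r : Fin k → Bool)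
    (T : Finset ℕ) :
    ν (⋂ i ∈ T, prefixEvent r i) = ENNReal.ofReal (wordProb p (1 - p) r) ^ #T := by
  let b : ℕ × ℕ → Bool := fun s ↦ if h : s.2 < k then r ⟨s.2, h⟩ else false
  have hcylinder : ⋂ i ∈ T, prefixEvent r i = {ω | ∀ s ∈ T ×ˢ range k, ω s.1 s.2 = b s} := by
    ext ω
    simp only [prefixEvent, Set.mem_iInter, Set.mem_ofPred_eq, mem_product, mem_range, Prod.forall,
      Fin.forall_iff, b]
    grind
  have hbit (j : Fin k) : 0 ≤ if r j then p else 1 - p := by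
    have := hν.mem_Icc
    split_ifs <;> grind
  rw [hcylinder, hν.2, prod_product, wordProb_eq_prod,
    ENNReal.ofReal_prod_of_nonneg fun j _ ↦ hbit j]
  exact prod_eq_pow_card fun i _ ↦ by simp [prod_range, b]

theorem measure_prefixEvent (hν : IIDBits p ν) {k : ℕ} (r : Fin k → Bool) (i : ℕ) :
    ν (prefixEvent r i) = ENNReal.ofReal (wordProb p (1 - p) r) := by
  simpa using hν.measure_biInter_prefixEvent r {i}

theorem iIndepSet_prefixEvent (hν : IIDBits p ν) {k : ℕ} (r : Fin k → Bool) :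
    iIndepSet (prefixEvent r) ν := by
  refine (iIndepSet_iff_meas_biInter (measurableSet_prefixEvent r)).2 fun T ↦ ?_
  simp only [hν.measure_biInter_prefixEvent, hν.measure_prefixEvent, prod_const]

theorem hasLaw_prefCount (hν : IIDBits p ν) (lam : ℝ≥0) {k : ℕ} (r : Fin k → Bool) :
    HasLaw (fun ω ↦ prefCount ω.2 ω.1 k r)
      (poissonMeasure (lam * (wordProb p (1 - p) r).toNNReal)) (poModel lam ν) :=
  hasLaw_card_filter_range_mem_poissonMeasure_prod (measurableSet_prefixEvent r)
    (hν.iIndepSet_prefixEvent r) (hν.measure_prefixEvent r) lam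

end IIDBits

theorem prefCount_snoc_true_add_prefCount_snoc_false (ω : ℕ → ℕ → Bool) (n : ℕ) {k : ℕ}
    (r : Fin k → Bool) :
    prefCount ω n (k + 1) (Fin.snoc r true) + prefCount ω n (k + 1) (Fin.snoc r false) =
      prefCount ω n k r := by
  simp only [prefCount, card_filter, ← sum_add_distrib]
  refine sum_congr rfl fun i _ ↦ ?_
  cases h : ω i k <;> simp [Fin.forall_fin_succ', h]

theorem fillCount_succ (ω : ℕ → ℕ → Bool) (n k : ℕ) :
    fillCount ω n (k + 1) = ∑ r : Fin k → Bool,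
      ((if 2 ≤ prefCount ω n (k + 1) (Fin.snoc r true) then 1 else 0) +
        if 2 ≤ prefCount ω n (k + 1) (Fin.snoc r false) then 1 else 0) := by
  rw [fillCount, card_filter, ← (Fin.snocEquiv fun _ ↦ Bool).sum_comp, Fintype.sum_prod_type_right]
  simp only [Fintype.sum_bool]
  rfl

theorem fillCount_succ_add_card_prefCount_eq_two_le (ω : ℕ → ℕ → Bool) (n k : ℕ) :
    fillCount ω n (k + 1) + #{r : Fin k → Bool | prefCount ω n k r = 2} ≤
      2 * fillCount ω n k := by
  rw [fillCount_succ, fillCount, card_filter, card_filter, ← sum_add_distrib, mul_sum]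
  refine sum_le_sum fun r _ ↦ ?_
  have hsplit := prefCount_snoc_true_add_prefCount_snoc_false ω n r
  split_ifs <;> omega

theorem measurable_fillCountPo (k : ℕ) : Measurable (fillCountPo k) :=
  measurable_card_filter_mem
    (A := fun (r : Fin k → Bool) ↦ {ω : ℕ × (ℕ → ℕ → Bool) | 2 ≤ prefCount ω.2 ω.1 k r})
    (fun r ↦ measurable_prefCount r measurableSet_Ici) univ

theorem fillCountPo_le (k : ℕ) (ω : ℕ × (ℕ → ℕ → Bool)) : fillCountPo k ω ≤ 2 ^ k :=
  (card_le_univ _).trans_eq (by simp)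

section Expectation

variable (μ : Measure (ℕ × (ℕ → ℕ → Bool))) [IsFiniteMeasure μ] (k : ℕ)

theorem integrable_fillCountPo : Integrable (fun ω ↦ (fillCountPo k ω : ℝ)) μ := by
  refine .of_bound (measurable_from_top.comp (measurable_fillCountPo k)).aestronglyMeasurable
    (2 ^ k) (ae_of_all _ fun ω ↦ ?_)
  rw [Real.norm_natCast]
  exact_mod_cast fillCountPo_le k ω

theorem sum_measureReal_prefCount_eq_two_le_integral :
    ∑ r : Fin k → Bool, μ.real {ω | prefCount ω.2 ω.1 k r = 2} ≤
      ∫ ω, (2 * (fillCountPo k ω : ℝ) - fillCountPo (k + 1) ω) ∂μ := by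
  let E (r : Fin k → Bool) : Set (ℕ × (ℕ → ℕ → Bool)) := {ω | prefCount ω.2 ω.1 k r = 2}
  have hmeas (r : Fin k → Bool) : MeasurableSet (E r) :=
    measurable_prefCount r (measurableSet_singleton 2)
  have hint (r : Fin k → Bool) : Integrable ((E r).indicator fun _ ↦ (1 : ℝ)) μ :=
    (integrable_const 1).indicator (hmeas r)
  have hpointwise (ω : ℕ × (ℕ → ℕ → Bool)) :
      ∑ r, (E r).indicator (fun _ ↦ (1 : ℝ)) ω ≤
        2 * (fillCountPo k ω : ℝ) - fillCountPo (k + 1) ω := by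
    have hcount : (fillCountPo (k + 1) ω + #{r : Fin k → Bool | prefCount ω.2 ω.1 k r = 2} : ℝ) ≤
        2 * fillCountPo k ω :=
      mod_cast fillCount_succ_add_card_prefCount_eq_two_le ω.2 ω.1 k
    simp only [E, Set.indicator_apply, Set.mem_ofPred_eq, sum_boole]
    linarith
  calc ∑ r, μ.real (E r)
      = ∫ ω, ∑ r, (E r).indicator (fun _ ↦ (1 : ℝ)) ω ∂μ := by
        rw [integral_finsetSum _ fun r _ ↦ hint r]
        simp only [integral_indicator_const _ (hmeas _), smul_eq_mul, mul_one]
    _ ≤ ∫ ω, (2 * (fillCountPo k ω : ℝ) - fillCountPo (k + 1) ω) ∂μ :=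
        integral_mono (integrable_finsetSum _ fun r _ ↦ hint r)
          (((integrable_fillCountPo μ k).const_mul 2).sub (integrable_fillCountPo μ (k + 1)))
          hpointwise

end Expectation

/-- In the Poissonized model:
`E[2 X_k(λ) - X_{k+1}(λ)] ≥ Σ_{r ∈ {0,1}^k} P(Po(λ P_r) = 2)`. -/
theorem expectation_two_fillCountPo_sub
    (p q : ℝ) (hp : 0 < p) (hp1 : p < 1) (hq : q = 1 - p)
    (lam : NNReal) (hlam : 0 < lam)
    (ν : Measure (ℕ → ℕ → Bool)) (hν : IIDBits p ν) (k : ℕ) :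
    (∑ r : Fin k → Bool,
        ProbabilityTheory.poissonPMFReal (lam * (wordProb p q r).toNNReal) 2) ≤
      ∫ ω, (2 * (fillCountPo k ω : ℝ) - (fillCountPo (k + 1) ω : ℝ)) ∂poModel lam ν := by
  subst hq
  have := hν.1
  have : IsFiniteMeasure (poModel lam ν) := by
    unfold poModel
    infer_instance
  have hlaw (r : Fin k → Bool) :
      (poModel lam ν).real {ω | prefCount ω.2 ω.1 k r = 2} =
        (poissonMeasure (lam * (wordProb p (1 - p) r).toNNReal)).real {2} :=
    (hν.hasLaw_prefCount lam r).measureReal_eq (measurableSet_singleton 2)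
  calc _ = ∑ r : Fin k → Bool, (poModel lam ν).real {ω | prefCount ω.2 ω.1 k r = 2} :=
        sum_congr rfl fun r _ ↦ ((hlaw r).trans (poissonMeasure_real_singleton _ 2)).symm
    _ ≤ _ := sum_measureReal_prefCount_eq_two_le_integral (poModel lam ν) k
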